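/- Let f: A → B be a homomorphism of MV-algebras, let θ_f := ker(f) ∩ Rad(A), and let f̄: A/θ_f → B be the induced homomorphism [a] ↦ f(a) (well defined since θ_f ⊆ ker(f)). Then ker(f̄) ∩ Rad(A/θ_f) = {0}. -/

import Mathlib

namespace MVPaper

/-- An MV-algebra: a set with a binary `⊕`, a unary `¬`, and a constant `0`
satisfying the MV-algebra axioms. -/
class MV (α : Type*) where
  oplus : α → α → α
  neg : α → α
  zero : α
  oplus_assoc : ∀ x y z : α, oplus x (oplus y z) = oplus (oplus x y) z
  oplus_comm : ∀ x y : α, oplus x y = oplus y x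
  oplus_zero : ∀ x : α, oplus x zero = x
  neg_neg : ∀ x : α, neg (neg x) = x
  oplus_neg_zero : ∀ x : α, oplus x (neg zero) = neg zero
  lukasiewicz : ∀ x y : α,
    oplus (neg (oplus (neg x) y)) y = oplus (neg (oplus (neg y) x)) x

namespace MV

variable {α : Type*} [MV α]

/-- `1 := ¬0`. -/
def one : α := neg zero

/-- `x ⊙ y := ¬(¬x ⊕ ¬y)`. -/
def odot (x y : α) : α := neg (oplus (neg x) (neg y))

/-- `x ⊖ y := ¬(¬x ⊕ y)`. -/
def ominus (x y : α) : α := neg (oplus (neg x) y)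

/-- `d(x,y) := (x ⊖ y) ⊕ (y ⊖ x)`. -/
def dist (x y : α) : α := oplus (ominus x y) (ominus y x)

/-- The natural order: `x ≤ y` iff `¬x ⊕ y = 1`. -/
def le (x y : α) : Prop := oplus (neg x) y = one

/-- `x ∨ y := (x ⊖ y) ⊕ y`. -/
def sup (x y : α) : α := oplus (ominus x y) y

/-- `x ∧ y := x ⊙ (¬x ⊕ y)`. -/
def inf (x y : α) : α := odot x (oplus (neg x) y)

/-- `n · a`, the `n`-fold sum `a ⊕ ⋯ ⊕ a`. -/
def nsmul : ℕ → α → α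
  | 0, _ => zero
  | n + 1, a => oplus a (nsmul n a)

end MV

/-- Products of MV-algebras, with componentwise operations. -/
instance prodMV {α β : Type*} [MV α] [MV β] : MV (α × β) where
  oplus x y := (MV.oplus x.1 y.1, MV.oplus x.2 y.2)
  neg x := (MV.neg x.1, MV.neg x.2)
  zero := (MV.zero, MV.zero)
  oplus_assoc x y z :=
    congrArg₂ Prod.mk (MV.oplus_assoc _ _ _) (MV.oplus_assoc _ _ _)
  oplus_comm x y :=
    congrArg₂ Prod.mk (MV.oplus_comm _ _) (MV.oplus_comm _ _)
  oplus_zero x := by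
    obtain ⟨a, b⟩ := x
    exact congrArg₂ Prod.mk (MV.oplus_zero a) (MV.oplus_zero b)
  neg_neg x := by
    obtain ⟨a, b⟩ := x
    exact congrArg₂ Prod.mk (MV.neg_neg a) (MV.neg_neg b)
  oplus_neg_zero x :=
    congrArg₂ Prod.mk (MV.oplus_neg_zero _) (MV.oplus_neg_zero _)
  lukasiewicz x y :=
    congrArg₂ Prod.mk (MV.lukasiewicz _ _) (MV.lukasiewicz _ _)

/-- A homomorphism of MV-algebras: a map preserving `⊕`, `¬` and `0`. -/
structure IsHom {α β : Type*} [MV α] [MV β] (f : α → β) : Prop where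
  map_zero : f MV.zero = MV.zero
  map_oplus : ∀ x y : α, f (MV.oplus x y) = MV.oplus (f x) (f y)
  map_neg : ∀ x : α, f (MV.neg x) = MV.neg (f x)

/-- An ideal of an MV-algebra: contains `0`, closed under `⊕`, downward closed. -/
structure IsIdeal {α : Type*} [MV α] (I : Set α) : Prop where
  zero_mem : MV.zero ∈ I
  oplus_mem : ∀ ⦃x⦄, x ∈ I → ∀ ⦃y⦄, y ∈ I → MV.oplus x y ∈ I
  lower_mem : ∀ ⦃x⦄, x ∈ I → ∀ ⦃y⦄, MV.le y x → y ∈ I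

/-- The kernel of a homomorphism. -/
def ker {α β : Type*} [MV α] [MV β] (f : α → β) : Set α := {x | f x = MV.zero}

/-- The radical of an MV-algebra: `Rad(A) = {a | n·a ≤ ¬a for all n}`
(the intersection of all maximal proper ideals). -/
def Rad (α : Type*) [MV α] : Set α :=
  {a | ∀ n : ℕ, MV.le (MV.nsmul n a) (MV.neg a)}

/-- `P(A) := Rad(A) ∪ ¬Rad(A)`. -/
def PSet (α : Type*) [MV α] : Set α :=
  Rad α ∪ {x | MV.neg x ∈ Rad α}

/-- An MV-algebra is trivial if `0 = 1`. -/
def IsTrivial (α : Type*) [MV α] : Prop := (MV.zero : α) = MV.one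

/-- An MV-algebra is semisimple if its radical is trivial. -/
def Semisimple (α : Type*) [MV α] : Prop := Rad α = ({MV.zero} : Set α)

/-- An MV-algebra is perfect if `A = Rad(A) ∪ ¬Rad(A)`. -/
def Perfect (α : Type*) [MV α] : Prop := ∀ a : α, a ∈ PSet α

/-- `q : α → Q` realizes `Q` as the quotient of `α` by the ideal `I`,
i.e. by the congruence `x ∼ y ↔ d(x,y) ∈ I`. -/
structure IsQuotientBy {α Q : Type*} [MV α] [MV Q] (I : Set α) (q : α → Q) : Prop where
  hom : IsHom q
  surj : Function.Surjective q
  eq_iff : ∀ x y : α, q x = q y ↔ MV.dist x y ∈ I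

namespace MV

variable {α : Type*} [MV α]

instance : Std.Associative (oplus : α → α → α) := ⟨fun x y z => (oplus_assoc x y z).symm⟩

instance : Std.Commutative (oplus : α → α → α) := ⟨oplus_comm⟩

theorem zero_oplus (x : α) : oplus zero x = x := by
  rw [oplus_comm, oplus_zero]

theorem oplus_one (x : α) : oplus x one = one := oplus_neg_zero x

theorem one_oplus (x : α) : oplus one x = one := by
  rw [oplus_comm, oplus_one]

theorem neg_one : neg (one : α) = zero := neg_neg zero

theorem neg_oplus_self (x : α) : oplus (neg x) x = one := by
  have h := lukasiewicz (one : α) x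
  rwa [neg_one, zero_oplus, oplus_one] at h

theorem le_oplus_right (x y : α) : le x (oplus x y) := by
  unfold le
  rw [oplus_assoc, neg_oplus_self, one_oplus]

theorem exists_eq_oplus_of_le {x y : α} (h : le x y) : ∃ z, y = oplus x z := by
  have hl := lukasiewicz x y
  unfold le at h
  rw [h, neg_one, zero_oplus] at hl
  exact ⟨_, hl.trans (oplus_comm _ _)⟩

theorem le_trans {x y z : α} (hxy : le x y) (hyz : le y z) : le x z := by
  obtain ⟨u, rfl⟩ := exists_eq_oplus_of_le hxy
  obtain ⟨v, rfl⟩ := exists_eq_oplus_of_le hyz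
  rw [← oplus_assoc]
  exact le_oplus_right _ _

theorem oplus_le_oplus {x y z w : α} (hxy : le x y) (hzw : le z w) :
    le (oplus x z) (oplus y w) := by
  obtain ⟨u, rfl⟩ := exists_eq_oplus_of_le hxy
  obtain ⟨v, rfl⟩ := exists_eq_oplus_of_le hzw
  have h : oplus (oplus x u) (oplus z v) = oplus (oplus x z) (oplus u v) := by ac_rfl
  rw [h]
  exact le_oplus_right _ _

theorem nsmul_le_nsmul {x y : α} (h : le x y) (n : ℕ) : le (nsmul n x) (nsmul n y) := by
  induction n with
  | zero => exact neg_oplus_self _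
  | succ n ih => exact oplus_le_oplus h ih

theorem nsmul_oplus (n : ℕ) (x y : α) :
    nsmul n (oplus x y) = oplus (nsmul n x) (nsmul n y) := by
  induction n with
  | zero => exact (oplus_zero zero).symm
  | succ n ih =>
    simp only [nsmul, ih]
    ac_rfl

theorem oplus_nsmul_eq_self {x y : α} (h : oplus x y = x) (n : ℕ) :
    oplus x (nsmul n y) = x := by
  induction n with
  | zero => exact oplus_zero x
  | succ n ih => rw [nsmul, oplus_assoc, h, ih]

theorem dist_zero (x : α) : dist x zero = x := by
  change oplus (neg (oplus (neg x) zero)) (neg (oplus one x)) = x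
  rw [oplus_zero, neg_neg, one_oplus, neg_one, oplus_zero]

theorem sup_eq_left {x y : α} (h : le y x) : oplus (ominus x y) y = x := by
  unfold le at h
  rw [ominus, lukasiewicz, h, neg_one, zero_oplus]

theorem le_sup_left (x y : α) : le x (oplus (ominus x y) y) := by
  rw [ominus, lukasiewicz, oplus_comm]
  exact le_oplus_right _ _

theorem odot_le_right (x y : α) : le (odot x y) y := by
  unfold le odot
  rw [neg_neg, ← oplus_assoc, neg_oplus_self, oplus_one]

theorem oplus_oplus_odot (x y : α) : oplus (oplus x y) (odot x y) = oplus x y := by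
  have h : oplus x (ominus y (odot x y)) = oplus x y := by
    have hm : ominus y (odot x y) = ominus (oplus x y) x := by
      have hl := lukasiewicz x (neg y)
      rw [neg_neg, oplus_comm, oplus_comm y x] at hl
      exact congrArg neg hl
    rw [hm, oplus_comm x, sup_eq_left (le_oplus_right x y)]
  calc oplus (oplus x y) (odot x y)
      = oplus x (oplus (ominus y (odot x y)) (odot x y)) := by
        rw [oplus_assoc, h]
    _ = oplus x y := by rw [sup_eq_left (odot_le_right x y)]

/-- If `c = (n+1)·a ⊙ a` satisfies `n·c ≤ ¬c`, then already `n·a ≤ ¬a`. -/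
theorem nsmul_le_neg_of_odot {a : α} {n : ℕ}
    (h : le (nsmul n (odot (nsmul (n + 1) a) a)) (neg (odot (nsmul (n + 1) a) a))) :
    le (nsmul n a) (neg a) := by
  set e := neg (nsmul (n + 1) a) with he
  have hc : odot (nsmul (n + 1) a) a = ominus a e := by
    rw [odot, ominus, oplus_comm]
  have hnc : neg (ominus a e) = oplus (neg a) e := by rw [ominus, neg_neg]
  rw [hc, hnc] at h
  have hle : le (nsmul n a) (oplus (oplus (neg a) e) (nsmul n e)) := by
    refine le_trans (nsmul_le_nsmul (le_sup_left a e) n) ?_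
    rw [nsmul_oplus]
    exact oplus_le_oplus h (neg_oplus_self _)
  have habs : oplus (oplus (neg (nsmul n a)) (neg a)) e = oplus (neg (nsmul n a)) (neg a) := by
    have hx := oplus_oplus_odot (neg (nsmul n a)) (neg a)
    rwa [odot, neg_neg, neg_neg, oplus_comm (nsmul n a) a] at hx
  have hsum := oplus_nsmul_eq_self habs n
  unfold le at hle ⊢
  rwa [oplus_assoc, oplus_assoc, habs, hsum] at hle

end MV

theorem IsHom.map_nsmul {α β : Type*} [MV α] [MV β] {f : α → β} (hf : IsHom f) (n : ℕ) (x : α) :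
    f (MV.nsmul n x) = MV.nsmul n (f x) := by
  induction n with
  | zero => exact hf.map_zero
  | succ n ih => rw [MV.nsmul, hf.map_oplus, ih, MV.nsmul]

theorem IsHom.map_odot {α β : Type*} [MV α] [MV β] {f : α → β} (hf : IsHom f) (x y : α) :
    f (MV.odot x y) = MV.odot (f x) (f y) := by
  simp only [MV.odot, hf.map_neg, hf.map_oplus]

theorem zero_mem_Rad (α : Type*) [MV α] : (MV.zero : α) ∈ Rad α :=
  fun _ => MV.oplus_one _

theorem IsQuotientBy.map_eq_zero_iff {α Q : Type*} [MV α] [MV Q] {I : Set α} {q : α → Q}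
    (hq : IsQuotientBy I q) (x : α) : q x = MV.zero ↔ x ∈ I := by
  rw [← hq.hom.map_zero, hq.eq_iff, MV.dist_zero]

/-- The preimage of the radical under a quotient by an ideal inside the radical
is contained in the radical. -/
theorem IsQuotientBy.mem_Rad_of_map_mem_Rad {α Q : Type*} [MV α] [MV Q] {I : Set α} {q : α → Q}
    (hq : IsQuotientBy I q) (hI : I ⊆ Rad α) {a : α} (ha : q a ∈ Rad Q) : a ∈ Rad α := by
  intro n
  refine MV.nsmul_le_neg_of_odot (hI ((hq.map_eq_zero_iff _).1 ?_) n)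
  have h : MV.oplus (MV.neg (MV.nsmul (n + 1) (q a))) (MV.neg (q a)) = MV.one := ha (n + 1)
  rw [hq.hom.map_odot, hq.hom.map_nsmul, MV.odot, h, MV.neg_one]

/-- Let `f : A → B` be a homomorphism, `θ_f := ker f ∩ Rad A`, and let
`f̄ : A/θ_f → B` be the induced homomorphism (`f̄ ∘ π = f` where `π` is the
quotient map). Then `ker f̄ ∩ Rad(A/θ_f) = {0}`. -/
theorem ker_inter_rad_of_quotient {α β Q : Type*} [MV α] [MV β] [MV Q]
    {f : α → β} (hf : IsHom f)
    {π : α → Q} (hπ : IsQuotientBy (ker f ∩ Rad α) π)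
    {fb : Q → β} (hfb : IsHom fb) (hfac : fb ∘ π = f) :
    ker fb ∩ Rad Q = ({MV.zero} : Set Q) := by
  ext y
  constructor
  · rintro ⟨hker, hrad⟩
    obtain ⟨a, rfl⟩ := hπ.surj y
    have hfa : f a = MV.zero := by rw [← hfac]; exact hker
    exact (hπ.map_eq_zero_iff a).2
      ⟨hfa, hπ.mem_Rad_of_map_mem_Rad Set.inter_subset_right hrad⟩
  · rintro rfl
    exact ⟨hfb.map_zero, zero_mem_Rad Q⟩

end MVPaper
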